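/- Let λ = (λ_1 ≤ … ≤ λ_n) be a sequential nondecreasing sequence of positive integers for which I(λ) exists, and set μ = mm(λ) = |{i : λ_i = λ_n}| (note that I(λ) ⊆ {1,…,n−μ}). Let S = S_λ = {x ∈ {-1,0,1}^n : Σ_{i=1}^n λ_i x_i = 0}, let T = {z ∈ {-1,0,1}^{n−μ} : Σ_{i=1}^{n−μ} λ_i z_i = 0}, and let π ∈ P(n) and ν ∈ P(n−μ) be the partitions whose only non-singleton block is I(λ). Then: (i) π↓S = {ρ ∈ P(n) : ρ|_{{1,…,n−μ}} ∈ ν↓T}; and (ii) S ∖ (π↓S) = {x ∈ {-1,0,1}^n : (x_1,…,x_{n−μ}) ∈ T∖(ν↓T) and Σ_{i=n−μ+1}^{n} x_i = 0}. -/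

import Mathlib

/-- A vector in ℝ^n with all coordinates in {-1,0,1}. -/
def IsCube {n : ℕ} (x : Fin n → ℝ) : Prop := ∀ i, x i = -1 ∨ x i = 0 ∨ x i = 1

def PlusSet {n : ℕ} (x : Fin n → ℝ) : Set (Fin n) := {i | x i = 1}

def MinusSet {n : ℕ} (x : Fin n → ℝ) : Set (Fin n) := {i | x i = -1}

/-- An `n`-cut: a span-closed subset of {-1,0,1}^n all of whose nonzero elements
have nonempty Plus and Minus sets. -/
def IsCut {n : ℕ} (S : Set (Fin n → ℝ)) : Prop :=
  (∀ x ∈ S, IsCube x) ∧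
  ((Submodule.span ℝ S : Set (Fin n → ℝ)) ∩ {x | IsCube x}) = S ∧
  ∀ x ∈ S, x ≠ 0 → (PlusSet x).Nonempty ∧ (MinusSet x).Nonempty
/-- The multiset of coordinates where `x` equals 1 (each appearing once). -/
noncomputable def plusM {n : ℕ} (x : Fin n → ℝ) : Multiset (Fin n) :=
  (Finset.univ.filter (fun i => x i = 1)).val

/-- The multiset of coordinates where `x` equals -1 (each appearing once). -/
noncomputable def minusM {n : ℕ} (x : Fin n → ℝ) : Multiset (Fin n) :=
  (Finset.univ.filter (fun i => x i = -1)).val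

/-- One step of the closure operation `⇓S` on collections of multisubsets of `[n]`:
(2) merge two blocks; (3) replace, inside one block, one copy of each element of
`Plus(x)` by one copy of each element of `Minus(x)`, for some `x ∈ S`. -/
inductive DownStep {n : ℕ} (S : Set (Fin n → ℝ)) :
    Multiset (Multiset (Fin n)) → Multiset (Multiset (Fin n)) → Prop
  | merge (B₁ B₂ : Multiset (Fin n)) (rest : Multiset (Multiset (Fin n))) :
      DownStep S (B₁ ::ₘ B₂ ::ₘ rest) ((B₁ + B₂) ::ₘ rest)
  | swap (B₁ : Multiset (Fin n)) (rest : Multiset (Multiset (Fin n))) (x : Fin n → ℝ)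
      (hx : x ∈ S) (hsub : plusM x ≤ B₁) :
      DownStep S (B₁ ::ₘ rest) ((B₁ - plusM x + minusM x) ::ₘ rest)

/-- A multiset of multisets of `[n]` which is an honest partition of `[n]`:
all blocks nonempty, globally no repetitions, and every element covered. -/
def IsPartitionM {n : ℕ} (A : Multiset (Multiset (Fin n))) : Prop :=
  (∀ B ∈ A, B ≠ 0) ∧ A.sum.Nodup ∧ ∀ i : Fin n, i ∈ A.sum

/-- `π ↓ S`: the set of honest partitions of `[n]` reachable from `π` by `⇓S`-steps. -/
def downClos {n : ℕ} (S : Set (Fin n → ℝ)) (π : Multiset (Multiset (Fin n))) :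
    Set (Multiset (Multiset (Fin n))) :=
  {ρ | IsPartitionM ρ ∧ Relation.ReflTransGen (DownStep S) π ρ}

/-- The partition of `[n]` whose only non-singleton blocks are `Plus(s)` and `Minus(s)`. -/
noncomputable def partOf {n : ℕ} (s : Fin n → ℝ) : Multiset (Multiset (Fin n)) :=
  plusM s ::ₘ minusM s ::ₘ
    ((Finset.univ.filter (fun i => s i = 0)).val.map (fun i => ({i} : Multiset (Fin n))))

/-- `S ∖ Π`: remove from `S` every element `s` whose associated partition
(non-singleton blocks `Plus(s)`, `Minus(s)`) lies in `Π`. -/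
noncomputable def cutMinus {n : ℕ} (S : Set (Fin n → ℝ))
    (P : Set (Multiset (Multiset (Fin n)))) : Set (Fin n → ℝ) :=
  {s | s ∈ S ∧ partOf s ∉ P}

/-- The partition of `[n]` whose only (potentially) non-singleton block is `A`. -/
def onlyBlock {n : ℕ} (A : Finset (Fin n)) : Multiset (Multiset (Fin n)) :=
  A.val ::ₘ ((Finset.univ \ A).val.map (fun i => ({i} : Multiset (Fin n))))

/-- Restriction of a partition of `[n]` to the first `l` coordinates `{0,…,l-1}`. -/
def restrictFirst {n : ℕ} (l : ℕ) (ρ : Multiset (Multiset (Fin n))) :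
    Multiset (Multiset (Fin l)) :=
  (ρ.map (fun B => B.filterMap
    (fun i => if h : (i : ℕ) < l then some (⟨(i : ℕ), h⟩ : Fin l) else none))).filter
    (fun B => B ≠ 0)

/-- A sequence `λ : [n] → ℕ` is sequential if whenever `Σ_{i∈I} λ_i = Σ_{j∈J} λ_j`
and `q ∈ I` is the maximum of `I ∪ J`, some subset `J' ⊆ J` has `Σ_{j∈J'} λ_j = λ_q`. -/
def IsSequentialSeq {n : ℕ} (lam : Fin n → ℕ) : Prop :=
  ∀ I J : Finset (Fin n), ∑ i ∈ I, lam i = ∑ j ∈ J, lam j →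
    ∀ q ∈ I, (∀ p ∈ I ∪ J, p ≤ q) → ∃ J' ⊆ J, lam q = ∑ j ∈ J', lam j

/-- `A` is lexicographically larger than `B`: either `B ⊆ A`, or, writing the elements
increasingly, the largest `q` elements agree and the next one of `A` is bigger. -/
def LexLarger {n : ℕ} (A B : Finset (Fin n)) : Prop :=
  B ⊆ A ∨ ∃ q : ℕ, q < min A.card B.card ∧
    (∀ i : ℕ, i < q →
      (A.sort (· ≤ ·))[A.card - 1 - i]? = (B.sort (· ≤ ·))[B.card - 1 - i]?) ∧
    ∃ x y : Fin n, (A.sort (· ≤ ·))[A.card - 1 - q]? = some x ∧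
      (B.sort (· ≤ ·))[B.card - 1 - q]? = some y ∧ y < x

/-- A subset `I` of `[n+1]` with at least two elements whose `λ`-sum is the last
(largest) part of `λ`. -/
def GoodSet {n : ℕ} (lam : Fin (n + 1) → ℕ) (I : Finset (Fin (n + 1))) : Prop :=
  2 ≤ I.card ∧ ∑ i ∈ I, lam i = lam (Fin.last n)

/-- `I` is the set `I(λ)`: a good set which is lexicographically larger than every
other good set. -/
def IsIlam {n : ℕ} (lam : Fin (n + 1) → ℕ) (I : Finset (Fin (n + 1))) : Prop :=
  GoodSet lam I ∧ ∀ J, GoodSet lam J → LexLarger I J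

/-- A sequential `λ` is strongly sequential if either no good set exists, or `I(λ)`
exists and, with `q = max I(λ)`, some `J ⊆ I(λ) ∖ {q}` has `Σ_{j∈J} λ_j = λ_q`. -/
def StronglySequential {n : ℕ} (lam : Fin (n + 1) → ℕ) : Prop :=
  IsSequentialSeq lam ∧
  ((∀ I, ¬ GoodSet lam I) ∨
    ∃ I, IsIlam lam I ∧ ∃ q ∈ I, (∀ p ∈ I, p ≤ q) ∧
      ∃ J ⊆ I.erase q, lam q = ∑ j ∈ J, lam j)

/-- The cut associated to a sequence `λ`: cube vectors orthogonal to `λ`. -/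
noncomputable def cutOf {n : ℕ} (lam : Fin n → ℕ) : Set (Fin n → ℝ) :=
  {x | IsCube x ∧ ∑ i, (lam i : ℝ) * x i = 0}

/-!
A partition of `[n]` is recorded by a colouring `g` with the blocks as colour classes. Steps of
`⇓S_λ` merge blocks or change a block without changing its `λ`-weight, and any two sets of equal
weight are linked by such a step. Hence the partition of `g` is reachable from the one with single
block `A` if and only if some colouring that is constant on `A` has the same colour weights as `g`.

If such a colouring `f` differs from `g` at a largest part `λ_t`, then sequentiality gives a set
`J` of parts with `f`-colour `g t` and of total weight `λ_t`. Exchanging the colours of `t` and `J`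
keeps all colour weights, and `J` may be replaced by `I(λ)` if it meets `I(λ)`. So `f` can be made
to agree with `g` on all largest parts, which then cancel from the weights, and only the first
`n - μ` parts matter.

If the largest parts do not cancel in `x ∈ S_λ`, then by sequentiality `Plus(x)` or `Minus(x)`
contains smaller parts with sum `λ_n`. Further exchanges move these up to the lexicographically
largest such set, which is `I(λ)`, and so the partition of `x` is reachable.
-/

section Colourings

/-- The colouring `f` is constant on `A`. -/
def IsMonochromatic {ι κ : Type*} (f : ι → κ) (A : Finset ι) : Prop := ∃ j, ∀ i ∈ A, f i = j

variable {ι κ M : Type*} [Fintype ι] [DecidableEq κ]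

/-- The set of points to which the colouring `f` gives the colour `j`. -/
def colourClass (f : ι → κ) (j : κ) : Finset ι := {i | f i = j}

/-- The partition of `ι` into the colour classes of `f`. Only the colours that occur contribute a
block, so that all blocks are nonempty. -/
def colourClasses (f : ι → κ) : Multiset (Multiset ι) :=
  (Finset.univ.image f).val.map fun j => (colourClass f j).val

/-- The total weight, with respect to `lam`, of each colour class of `f`. -/
def colourWeight [AddCommMonoid M] (lam : ι → M) (f : ι → κ) (j : κ) : M :=
  ∑ i ∈ colourClass f j, lam i

@[simp]
lemma mem_colourClass {f : ι → κ} {j : κ} {i : ι} : i ∈ colourClass f j ↔ f i = j := by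
  simp [colourClass]

lemma mem_colourClasses {f : ι → κ} {B : Multiset ι} :
    B ∈ colourClasses f ↔ ∃ i, (colourClass f (f i)).val = B := by
  simp [colourClasses]

lemma colourClass_comp_injective {κ' : Type*} [DecidableEq κ'] {e : κ → κ'}
    (he : Function.Injective e) (f : ι → κ) (j : κ) :
    colourClass (e ∘ f) (e j) = colourClass f j := by
  ext i
  simp [he.eq_iff]

lemma colourClasses_comp_injective {κ' : Type*} [DecidableEq κ'] {e : κ → κ'}
    (he : Function.Injective e) (f : ι → κ) : colourClasses (e ∘ f) = colourClasses f := by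
  rw [colourClasses, ← Finset.image_image, Finset.image_val_of_injOn he.injOn, Multiset.map_map]
  exact Multiset.map_congr rfl fun j _ => congrArg Finset.val (colourClass_comp_injective he f j)

lemma colourWeight_eq_sum_single [AddCommMonoid M] (lam : ι → M) (f : ι → κ) :
    colourWeight lam f = ∑ i, Pi.single (f i) (lam i) := by
  ext j
  simp [colourWeight, colourClass, Finset.sum_filter, Finset.sum_apply, Pi.single_apply, eq_comm]

lemma colourWeight_eq_zero_iff [AddCommMonoid M] [PartialOrder M] [CanonicallyOrderedAdd M]
    {lam : ι → M} (hlam : ∀ i, lam i ≠ 0) (f : ι → κ) (j : κ) :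
    colourWeight lam f j = 0 ↔ j ∉ Finset.univ.image f := by
  simp [colourWeight, Finset.sum_eq_zero_iff, hlam]

lemma image_eq_image_of_colourWeight_eq [AddCommMonoid M] [PartialOrder M]
    [CanonicallyOrderedAdd M] {lam : ι → M} (hlam : ∀ i, lam i ≠ 0) {f g : ι → κ}
    (h : colourWeight lam f = colourWeight lam g) :
    Finset.univ.image f = Finset.univ.image g := by
  ext j
  rw [← not_iff_not, ← colourWeight_eq_zero_iff hlam, h, colourWeight_eq_zero_iff hlam]

end Colourings

section Exchange

variable {ι κ M : Type*} [DecidableEq ι] {f : ι → κ} {J : Finset ι} {t : ι} {j : κ}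

/-- The colouring obtained from `f` by giving `J` the colour of `t`, and `t` the colour `j`. It is
used when `f` has the colour `j` on `J` and `J` has the same weight as `t`. -/
def exchange (f : ι → κ) (J : Finset ι) (t : ι) (j : κ) : ι → κ :=
  J.piecewise (fun _ => f t) (Function.update f t j)

lemma exchange_of_mem {i : ι} (hi : i ∈ J) : exchange f J t j i = f t :=
  J.piecewise_eq_of_mem _ _ hi

lemma exchange_self (ht : t ∉ J) : exchange f J t j t = j := by
  simp [exchange, ht]

lemma exchange_of_notMem {i : ι} (hi : i ∉ J) (hit : i ≠ t) : exchange f J t j i = f i := by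
  simp [exchange, hi, hit]

lemma colourWeight_exchange [Fintype ι] [DecidableEq κ] [AddCommMonoid M] {lam : ι → M}
    (ht : t ∉ J) (hJ : ∀ i ∈ J, f i = j) (hlam : ∑ i ∈ J, lam i = lam t) :
    colourWeight lam (exchange f J t j) = colourWeight lam f := by
  have hsingle (c : κ) : ∑ i ∈ J, Pi.single c (lam i) = (Pi.single c (lam t) : κ → M) := by
    rw [← hlam]
    exact (map_sum (AddMonoidHom.single (fun _ : κ => M) c) lam J).symm
  have hsplit (h : ι → κ) (c : κ) (hc : ∀ i ∈ J, h i = c) : colourWeight lam h =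
      Pi.single (h t) (lam t) + Pi.single c (lam t) +
        ∑ i ∈ (insert t J)ᶜ, Pi.single (h i) (lam i) := by
    rw [colourWeight_eq_sum_single, ← Finset.sum_add_sum_compl (insert t J),
      Finset.sum_insert ht, ← hsingle c]
    exact congrArg (_ + · + _) (Finset.sum_congr rfl fun i hi => by rw [hc i hi])
  rw [hsplit _ (f t) fun i hi => exchange_of_mem hi, hsplit f j hJ, exchange_self ht,
    add_comm (Pi.single j _)]
  refine congrArg (_ + ·) (Finset.sum_congr rfl fun i hi => ?_)
  simp only [Finset.mem_compl, Finset.mem_insert, not_or] at hi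
  rw [exchange_of_notMem hi.2 hi.1]

end Exchange

section Partitions

variable {n : ℕ} {κ : Type*} [DecidableEq κ] {ρ : Multiset (Multiset (Fin n))}

lemma isPartitionM_iff : IsPartitionM ρ ↔ (∀ B ∈ ρ, B ≠ 0) ∧ ρ.sum = Finset.univ.val := by
  refine and_congr_right fun _ => ⟨fun ⟨hn, hm⟩ => ?_, fun h => ?_⟩
  · exact (Multiset.Nodup.ext hn Finset.univ.nodup).2 fun i => by simp [hm i]
  · rw [h]
    exact ⟨Finset.univ.nodup, fun i => Finset.mem_univ i⟩

lemma IsPartitionM.nodup (hρ : IsPartitionM ρ) : ρ.Nodup := by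
  refine Multiset.nodup_iff_ne_cons_cons.2 fun B σ hσ => ?_
  obtain ⟨i, hi⟩ := Multiset.exists_mem_of_ne_zero (hρ.1 B (by simp [hσ]))
  have hcount := Multiset.nodup_iff_count_le_one.1 hρ.2.1 i
  simp only [hσ, Multiset.sum_cons, Multiset.count_add] at hcount
  have := Multiset.count_pos.2 hi
  omega

lemma isPartitionM_colourClasses (f : Fin n → κ) : IsPartitionM (colourClasses f) := by
  refine isPartitionM_iff.2 ⟨fun B hB => ?_, ?_⟩
  · obtain ⟨i, rfl⟩ := mem_colourClasses.1 hB
    exact Finset.val_eq_zero.not.2 (Finset.ne_empty_of_mem (mem_colourClass.2 (Eq.refl (f i))))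
  · change ∑ j ∈ Finset.univ.image f, (colourClass f j).val = _
    simp_rw [← Finset.sum_multiset_singleton]
    exact Finset.sum_fiberwise_of_maps_to (fun i hi => Finset.mem_image_of_mem f hi) _

lemma IsPartitionM.eq_colourClasses (hρ : IsPartitionM ρ) {f : Fin n → κ}
    (h : ∀ B ∈ ρ, ∃ j, (colourClass f j).val = B) : ρ = colourClasses f := by
  refine (Multiset.Nodup.ext hρ.nodup (isPartitionM_colourClasses f).nodup).2 fun B =>
    ⟨fun hB => ?_, fun hB => ?_⟩
  · obtain ⟨j, rfl⟩ := h B hB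
    obtain ⟨i, hi⟩ := Multiset.exists_mem_of_ne_zero (hρ.1 _ hB)
    obtain rfl : f i = j := mem_colourClass.1 hi
    exact mem_colourClasses.2 ⟨i, rfl⟩
  · obtain ⟨i, rfl⟩ := mem_colourClasses.1 hB
    obtain ⟨C, hC, hi⟩ := Multiset.mem_join.1 (hρ.2.2 i)
    obtain ⟨k, rfl⟩ := h C hC
    obtain rfl : f i = k := mem_colourClass.1 hi
    exact hC

lemma exists_colourClass_eq {K : Finset κ} {b : κ → Multiset (Fin n)}
    (hb : ∑ j ∈ K, b j = Finset.univ.val) :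
    ∃ f : Fin n → κ, (∀ i, f i ∈ K) ∧ ∀ j ∈ K, (colourClass f j).val = b j := by
  have hcount (i : Fin n) : ∑ j ∈ K, (b j).count i = 1 := by
    rw [← Multiset.count_sum', hb]
    exact Multiset.count_eq_one_of_mem Finset.univ.nodup (Finset.mem_univ i)
  have hmem (i : Fin n) : ∃ j ∈ K, i ∈ b j :=
    Multiset.mem_sum.1 (hb ▸ Finset.mem_univ i : i ∈ ∑ j ∈ K, b j)
  choose f hfK hfb using hmem
  refine ⟨f, hfK, fun j hj => Multiset.ext.2 fun i => ?_⟩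
  have hpos := Multiset.count_pos.2 (hfb i)
  have hsplit := hcount i
  rw [← Finset.add_sum_erase _ _ (hfK i)] at hsplit
  simp only [Multiset.count_eq_of_nodup (Finset.nodup _), Finset.mem_val, mem_colourClass]
  split_ifs with hij
  · subst hij
    omega
  · have hle := Finset.single_le_sum (f := fun j => (b j).count i) (fun _ _ => Nat.zero_le _)
      (Finset.mem_erase.2 ⟨Ne.symm hij, hj⟩)
    omega

lemma IsPartitionM.exists_eq_colourClasses (hρ : IsPartitionM ρ) :
    ∃ f : Fin n → Multiset (Fin n), ρ = colourClasses f := by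
  have hsum : ∑ B ∈ ρ.toFinset, B = Finset.univ.val := by
    rw [← (isPartitionM_iff.1 hρ).2, Finset.sum, Multiset.toFinset_val, hρ.nodup.dedup,
      Multiset.map_id']
  obtain ⟨f, -, hf⟩ := exists_colourClass_eq hsum
  exact ⟨f, hρ.eq_colourClasses fun B hB => ⟨B, hf B (Multiset.mem_toFinset.2 hB)⟩⟩

end Partitions

section Weights

/-- The total weight of a multiset, counted with multiplicity. -/
def weight {ι M : Type*} [AddCommMonoid M] (lam : ι → M) (B : Multiset ι) : M := (B.map lam).sum

lemma weight_add {ι M : Type*} [AddCommMonoid M] (lam : ι → M) (A B : Multiset ι) :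
    weight lam (A + B) = weight lam A + weight lam B := by
  simp [weight]

variable {n : ℕ} {lam : Fin n → ℕ} {x : Fin n → ℝ}

lemma IsCube.sum_mul_eq_sub (hx : IsCube x) (s : Finset (Fin n)) (c : Fin n → ℝ) :
    ∑ i ∈ s, c i * x i = ∑ i ∈ s with x i = 1, c i - ∑ i ∈ s with x i = -1, c i := by
  rw [Finset.sum_filter, Finset.sum_filter, ← Finset.sum_sub_distrib]
  refine Finset.sum_congr rfl fun i _ => ?_
  rcases hx i with h | h | h <;> norm_num [h]

lemma weight_plusM_eq_weight_minusM (hx : x ∈ cutOf lam) :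
    weight lam (plusM x) = weight lam (minusM x) := by
  have hsum := hx.1.sum_mul_eq_sub Finset.univ fun i => (lam i : ℝ)
  rw [hx.2, eq_comm, sub_eq_zero] at hsum
  change ∑ i with x i = 1, lam i = ∑ i with x i = -1, lam i
  exact_mod_cast hsum

lemma weight_sub_plusM_add_minusM (hx : x ∈ cutOf lam) {B : Multiset (Fin n)}
    (hB : plusM x ≤ B) : weight lam (B - plusM x + minusM x) = weight lam B := by
  rw [weight_add, ← weight_plusM_eq_weight_minusM hx, ← weight_add, tsub_add_cancel_of_le hB]

end Weights

section Reachability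

variable {n : ℕ} {S : Set (Fin n → ℝ)} {A B C D : Multiset (Multiset (Fin n))}

/-- Reachability by finitely many steps of `⇓S`, so that `DownReaches S A B` says `B ∈ A⇓S`. -/
abbrev DownReaches (S : Set (Fin n → ℝ)) :
    Multiset (Multiset (Fin n)) → Multiset (Multiset (Fin n)) → Prop :=
  Relation.ReflTransGen (DownStep S)

lemma DownStep.add_right (h : DownStep S A B) (C : Multiset (Multiset (Fin n))) :
    DownStep S (A + C) (B + C) := by
  cases h with
  | merge B₁ B₂ rest =>
    simpa only [Multiset.cons_add] using DownStep.merge (S := S) B₁ B₂ (rest + C)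
  | swap B₁ rest x hx hsub =>
    simpa only [Multiset.cons_add] using DownStep.swap B₁ (rest + C) x hx hsub

lemma DownReaches.add_right (h : DownReaches S A B) (C : Multiset (Multiset (Fin n))) :
    DownReaches S (A + C) (B + C) :=
  h.lift (· + C) fun _ _ hstep => hstep.add_right C

lemma DownReaches.add (hAB : DownReaches S A B) (hCD : DownReaches S C D) :
    DownReaches S (A + C) (B + D) := by
  refine (hAB.add_right C).trans ?_
  rw [add_comm B, add_comm B]
  exact hCD.add_right B

lemma downReaches_map {κ : Type*} {a b : κ → Multiset (Fin n)}
    (h : ∀ j, DownReaches S {a j} {b j}) (K : Multiset κ) :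
    DownReaches S (K.map a) (K.map b) := by
  induction K using Multiset.induction_on with
  | empty => exact .refl
  | cons j K ih =>
    rw [Multiset.map_cons, Multiset.map_cons, ← Multiset.singleton_add, ← Multiset.singleton_add]
    exact (h j).add ih

lemma downReaches_singleton_sum (hA : A ≠ 0) : DownReaches S A {A.sum} := by
  induction A using Multiset.induction_on with
  | empty => exact absurd rfl hA
  | cons B A ih =>
    rcases eq_or_ne A 0 with rfl | hA'
    · simpa using Relation.ReflTransGen.refl
    · rw [Multiset.sum_cons, ← Multiset.singleton_add]
      exact (DownReaches.add .refl (ih hA')).tail (.merge B A.sum 0)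

lemma downReaches_singleton_of_ne_zero {B : Multiset (Fin n)} (hB : B ≠ 0) :
    DownReaches S (B.map fun i => {i}) {B} := by
  have h := downReaches_singleton_sum (S := S) (A := B.map fun i => {i})
    (Multiset.map_eq_zero.not.2 hB)
  rwa [Multiset.sum_map_singleton] at h

lemma downReaches_of_forall_ne_zero (hA : ∀ B ∈ A, B ≠ 0) :
    DownReaches S (A.sum.map fun i => {i}) A := by
  induction A using Multiset.induction_on with
  | empty => exact .refl
  | cons B A ih =>
    rw [Multiset.sum_cons, Multiset.map_add, ← Multiset.singleton_add]
    exact (downReaches_singleton_of_ne_zero (hA B (by simp))).add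
      (ih fun C hC => hA C (by simp [hC]))

lemma sum_onlyBlock (A : Finset (Fin n)) : (onlyBlock A).sum = Finset.univ.val := by
  rw [onlyBlock, Multiset.sum_cons, Multiset.sum_map_singleton, Finset.sdiff_val]
  exact add_tsub_cancel_of_le (Finset.val_le_iff.2 A.subset_univ)

lemma downReaches_onlyBlock {ρ : Multiset (Multiset (Fin n))} (hρ : IsPartitionM ρ)
    {A : Finset (Fin n)} {B : Multiset (Fin n)} (hB : B ∈ ρ) (hAB : A.val ≤ B) :
    DownReaches S (onlyBlock A) ρ := by
  obtain ⟨σ, rfl⟩ := Multiset.exists_cons_of_mem hB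
  have hcompl : (Finset.univ \ A).val = (B - A.val) + σ.sum := by
    rw [Finset.sdiff_val, ← (isPartitionM_iff.1 hρ).2, Multiset.sum_cons,
      tsub_add_eq_add_tsub hAB]
  have hblock : DownReaches S ({A.val} + (B - A.val).map fun i => {i}) {B} := by
    have h := downReaches_singleton_sum (S := S) (A := {A.val} + (B - A.val).map fun i => {i})
      (by simp)
    rwa [Multiset.sum_add, Multiset.sum_singleton, Multiset.sum_map_singleton,
      add_tsub_cancel_of_le hAB] at h
  rw [onlyBlock, hcompl, Multiset.map_add, ← Multiset.singleton_add, ← add_assoc,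
    ← Multiset.singleton_add B]
  exact hblock.add (downReaches_of_forall_ne_zero fun C hC => hρ.1 C (by simp [hC]))

lemma downReaches_empty_superblock (h : DownReaches ∅ A B) {C : Multiset (Fin n)} (hC : C ∈ A) :
    ∃ D ∈ B, C ≤ D := by
  induction h with
  | refl => exact ⟨C, hC, le_rfl⟩
  | tail _ hstep ih =>
    obtain ⟨D, hD, hCD⟩ := ih
    cases hstep with
    | merge B₁ B₂ rest =>
      simp only [Multiset.mem_cons] at hD ⊢
      rcases hD with rfl | rfl | hD
      · exact ⟨_, .inl rfl, hCD.trans (Multiset.le_add_right _ _)⟩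
      · exact ⟨_, .inl rfl, hCD.trans (Multiset.le_add_left _ _)⟩
      · exact ⟨D, .inr hD, hCD⟩
    | swap B₁ rest x hx => exact hx.elim

lemma downReaches_empty_sum_eq (h : DownReaches ∅ A B) : B.sum = A.sum := by
  induction h with
  | refl => rfl
  | tail _ hstep ih =>
    cases hstep with
    | merge B₁ B₂ rest => simpa [add_assoc] using ih
    | swap B₁ rest x hx => exact hx.elim

lemma exists_downReaches_empty_rel_weight {lam : Fin n → ℕ} (h : DownReaches (cutOf lam) A B) :
    ∃ P, DownReaches ∅ A P ∧ Multiset.Rel (fun C D => weight lam C = weight lam D) P B := by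
  induction h with
  | refl => exact ⟨A, .refl, Multiset.rel_refl_of_refl_on fun _ _ => rfl⟩
  | tail _ hstep ih =>
    obtain ⟨P, hAP, hP⟩ := ih
    cases hstep with
    | merge B₁ B₂ rest =>
      obtain ⟨C₁, P₁, hC₁, hP₁, rfl⟩ := Multiset.rel_cons_right.1 hP
      obtain ⟨C₂, P₂, hC₂, hP₂, rfl⟩ := Multiset.rel_cons_right.1 hP₁
      exact ⟨_, hAP.tail (.merge C₁ C₂ P₂),
        .cons (by rw [weight_add, weight_add, hC₁, hC₂]) hP₂⟩
    | swap B₁ rest x hx hsub =>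
      obtain ⟨C₁, P₁, hC₁, hP₁, rfl⟩ := Multiset.rel_cons_right.1 hP
      exact ⟨_, hAP, .cons (hC₁.trans (weight_sub_plusM_add_minusM hx hsub).symm) hP₁⟩

lemma downReaches_cutOf_of_sum_eq {lam : Fin n → ℕ} {B D : Finset (Fin n)}
    (h : ∑ i ∈ B, lam i = ∑ i ∈ D, lam i) : DownReaches (cutOf lam) {B.val} {D.val} := by
  classical
  let x : Fin n → ℝ := fun i => (if i ∈ B then 1 else 0) - (if i ∈ D then 1 else 0)
  have hplus : plusM x = B.val - D.val := by
    rw [← Finset.sdiff_val]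
    refine congrArg Finset.val (Finset.ext fun i => ?_)
    by_cases hB : i ∈ B <;> by_cases hD : i ∈ D <;> norm_num [x, hB, hD]
  have hminus : minusM x = D.val - B.val := by
    rw [← Finset.sdiff_val]
    refine congrArg Finset.val (Finset.ext fun i => ?_)
    by_cases hB : i ∈ B <;> by_cases hD : i ∈ D <;> norm_num [x, hB, hD]
  have hx : x ∈ cutOf lam := by
    refine ⟨fun i => ?_, ?_⟩
    · by_cases hB : i ∈ B <;> by_cases hD : i ∈ D <;> norm_num [x, hB, hD]
    · simp only [x, mul_sub, mul_ite, mul_one, mul_zero, Finset.sum_sub_distrib,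
        Finset.sum_ite_mem, Finset.univ_inter, sub_eq_zero]
      exact_mod_cast h
  have hswap : B.val - plusM x + minusM x = D.val := by
    ext i
    simp only [hplus, hminus, Multiset.count_sub, Multiset.count_add]
    omega
  rw [← hswap]
  exact .single (.swap B.val 0 x hx (hplus ▸ tsub_le_self))

end Reachability

section Criterion

variable {n : ℕ} {κ : Type*} {lam : Fin n → ℕ}

lemma exists_map_eq_of_rel {α : Type*} [Nonempty α] {r : α → κ → Prop} {P : Multiset α}
    {K : Finset κ} (h : Multiset.Rel r P K.val) :
    ∃ b : κ → α, P = K.val.map b ∧ ∀ j ∈ K, r (b j) j := by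
  classical
  induction K using Finset.induction_on generalizing P with
  | empty => exact ⟨fun _ => Classical.arbitrary α, by simpa using h, by simp⟩
  | insert j K hj ih =>
    rw [Finset.insert_val_of_notMem hj] at h ⊢
    obtain ⟨B, P, hB, hP, rfl⟩ := Multiset.rel_cons_right.1 h
    obtain ⟨b, rfl, hb⟩ := ih hP
    have hb' : ∀ k ∈ K, Function.update b j B k = b k := fun k hk =>
      Function.update_of_ne (ne_of_mem_of_not_mem hk hj) _ _
    refine ⟨Function.update b j B, ?_, ?_⟩
    · rw [Multiset.map_cons, Function.update_self, Multiset.map_congr rfl hb']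
    · simpa [hB] using fun k hk => (hb' k hk).symm ▸ hb k hk

variable [DecidableEq κ]

lemma downReaches_colourClasses (hpos : ∀ i, 0 < lam i) {f g : Fin n → κ}
    (h : colourWeight lam f = colourWeight lam g) :
    DownReaches (cutOf lam) (colourClasses f) (colourClasses g) := by
  rw [colourClasses, image_eq_image_of_colourWeight_eq (fun i => (hpos i).ne') h]
  exact downReaches_map (fun j => downReaches_cutOf_of_sum_eq (congrFun h j)) _

lemma exists_colouring_of_downReaches (hpos : ∀ i, 0 < lam i) {A : Finset (Fin n)}
    {g : Fin n → κ} (h : DownReaches (cutOf lam) (onlyBlock A) (colourClasses g)) :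
    ∃ f : Fin n → κ, IsMonochromatic f A ∧ colourWeight lam f = colourWeight lam g := by
  obtain ⟨P, hAP, hP⟩ := exists_downReaches_empty_rel_weight h
  obtain ⟨b, rfl, hb⟩ := exists_map_eq_of_rel (Multiset.rel_map_right.1 hP)
  obtain ⟨f, hfK, hf⟩ := exists_colourClass_eq ((downReaches_empty_sum_eq hAP).trans
    (sum_onlyBlock A))
  refine ⟨f, ?_, funext fun j => ?_⟩
  · obtain ⟨B, hB, hAB⟩ := downReaches_empty_superblock hAP (Multiset.mem_cons_self A.val _)
    obtain ⟨j, hj, rfl⟩ := Multiset.mem_map.1 hB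
    rw [← hf j hj] at hAB
    exact ⟨j, fun i hi => mem_colourClass.1 (Finset.val_le_iff.1 hAB hi)⟩
  · by_cases hj : j ∈ Finset.univ.image g
    · exact (congrArg (weight lam) (hf j hj)).trans (hb j hj)
    · have hjf : j ∉ Finset.univ.image f := by
        rintro hjf
        obtain ⟨i, -, rfl⟩ := Finset.mem_image.1 hjf
        exact hj (hfK i)
      have hne : ∀ i, lam i ≠ 0 := fun i => (hpos i).ne'
      rw [(colourWeight_eq_zero_iff hne f j).2 hjf, (colourWeight_eq_zero_iff hne g j).2 hj]

lemma colourClasses_mem_downClos_iff (hpos : ∀ i, 0 < lam i) {A : Finset (Fin n)}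
    (hA : A.Nonempty) (g : Fin n → κ) :
    colourClasses g ∈ downClos (cutOf lam) (onlyBlock A) ↔
      ∃ f : Fin n → κ, IsMonochromatic f A ∧ colourWeight lam f = colourWeight lam g := by
  refine ⟨fun h => exists_colouring_of_downReaches hpos h.2, ?_⟩
  rintro ⟨f, ⟨j, hj⟩, hfg⟩
  obtain ⟨a, ha⟩ := hA
  have hA : A.val ≤ (colourClass f (f a)).val :=
    Finset.val_le_iff.2 fun i hi => mem_colourClass.2 ((hj i hi).trans (hj a ha).symm)
  exact ⟨isPartitionM_colourClasses g,
    (downReaches_onlyBlock (isPartitionM_colourClasses f) (mem_colourClasses.2 ⟨a, rfl⟩) hA).trans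
      (downReaches_colourClasses hpos hfg)⟩

end Criterion

section LexLarger

variable {n : ℕ} {A B : Finset (Fin n)}

lemma mem_of_sort_getElem? {k : ℕ} {p : Fin n} (h : (A.sort (· ≤ ·))[k]? = some p) : p ∈ A :=
  (Finset.mem_sort (· ≤ ·)).1 (List.mem_of_getElem? h)

lemma exists_lt_sort_getElem?_eq {q : ℕ} {x p : Fin n} (hq : q < A.card)
    (hx : (A.sort (· ≤ ·))[A.card - 1 - q]? = some x) (hp : p ∈ A) (hxp : x < p) :
    ∃ i < q, (A.sort (· ≤ ·))[A.card - 1 - i]? = some p := by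
  obtain ⟨k, hk, rfl⟩ := List.mem_iff_getElem.1 ((Finset.mem_sort (· ≤ ·)).2 hp)
  obtain ⟨hq', rfl⟩ := List.getElem?_eq_some_iff.1 hx
  have hlt : A.card - 1 - q < k := by
    simpa using ((Finset.sortedLT_sort A).strictMono_get.lt_iff_lt
      (a := ⟨A.card - 1 - q, hq'⟩) (b := ⟨k, hk⟩)).1 hxp
  have hlen : (A.sort (· ≤ ·)).length = A.card := Finset.length_sort _
  refine ⟨A.card - 1 - k, by omega, ?_⟩
  rw [show A.card - 1 - (A.card - 1 - k) = k by omega]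
  exact List.getElem?_eq_getElem hk

lemma LexLarger.toColex_le (h : LexLarger A B) : toColex B ≤ toColex A := by
  obtain hBA | ⟨q, hq, hagree, x, y, hx, hy, hyx⟩ := h
  · exact Finset.Colex.toColex_le_toColex_of_subset hBA
  obtain ⟨hqA, hqB⟩ := lt_min_iff.1 hq
  have hxB : x ∉ B := by
    intro hxB
    obtain ⟨i, hi, hxi⟩ := exists_lt_sort_getElem?_eq hqB hy hxB hyx
    have hlen : (A.sort (· ≤ ·)).length = A.card := Finset.length_sort _
    have := (List.getElem?_inj (by omega) (Finset.sort_nodup A (· ≤ ·))).1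
      (hx.trans ((hagree i hi).trans hxi).symm)
    omega
  refine Finset.Colex.toColex_le_toColex.2 fun p hpB hpA =>
    ⟨x, mem_of_sort_getElem? hx, hxB, not_lt.1 fun hxp => hpA ?_⟩
  obtain ⟨i, hi, hpi⟩ := exists_lt_sort_getElem?_eq hqB hy hpB (hyx.trans hxp)
  exact mem_of_sort_getElem? ((hagree i hi).trans hpi)

end LexLarger

section Sequential

variable {n w : ℕ} {lam : Fin n → ℕ}

lemma IsSequentialSeq.exists_subset_sum_eq (hseq : IsSequentialSeq lam) (hmono : Monotone lam)
    {A B : Finset (Fin n)} (hsum : ∑ i ∈ A, lam i = ∑ i ∈ B, lam i) {t : Fin n}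
    (ht : t ∈ A ∪ B) (hmax : ∀ p ∈ A ∪ B, lam p ≤ lam t) :
    ∃ J ⊆ B, ∑ i ∈ J, lam i = lam t := by
  have hne : (A ∪ B).Nonempty := ⟨t, ht⟩
  set q := (A ∪ B).max' hne
  have hqt : lam q = lam t :=
    le_antisymm (hmax q (Finset.max'_mem _ _)) (hmono (Finset.le_max' _ t ht))
  rcases Finset.mem_union.1 (Finset.max'_mem _ hne) with hqA | hqB
  · obtain ⟨J, hJB, hJ⟩ := hseq A B hsum q hqA fun p hp => Finset.le_max' _ p hp
    exact ⟨J, hJB, hJ.symm.trans hqt⟩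
  · exact ⟨{q}, Finset.singleton_subset_iff.2 hqB, by rw [Finset.sum_singleton, hqt]⟩

/-- The set `J` splits a part of size `w` into smaller parts. With `w` the largest part this is
`GoodSet`, see `goodSet_iff_isProperSplitting`. -/
def IsProperSplitting (lam : Fin n → ℕ) (w : ℕ) (J : Finset (Fin n)) : Prop :=
  (∀ i ∈ J, lam i < w) ∧ ∑ i ∈ J, lam i = w

lemma IsProperSplitting.one_lt_card {J : Finset (Fin n)} (hJ : IsProperSplitting lam w J)
    (hw : w ≠ 0) : 1 < J.card := by
  obtain ⟨a, ha⟩ := Finset.nonempty_of_sum_ne_zero (hJ.2.trans_ne hw)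
  refine Finset.one_lt_card_iff_nontrivial.2 ((Finset.nontrivial_iff_ne_singleton ha).2 ?_)
  rintro rfl
  exact (hJ.1 a ha).ne (by simpa using hJ.2)

lemma goodSet_iff_isProperSplitting {n : ℕ} {lam : Fin (n + 1) → ℕ} (hpos : ∀ i, 0 < lam i)
    {J : Finset (Fin (n + 1))} : GoodSet lam J ↔ IsProperSplitting lam (lam (Fin.last n)) J := by
  refine and_congr_left fun hsum => ⟨fun hcard i hi => ?_, fun hlt => ?_⟩
  · obtain ⟨k, hk, hki⟩ := Finset.exists_mem_ne hcard i
    rw [← hsum]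
    exact Finset.single_lt_sum hki hi hk (hpos k) fun _ _ _ => Nat.zero_le _
  · exact IsProperSplitting.one_lt_card ⟨hlt, hsum⟩ (hpos _).ne'

lemma exists_isProperSplitting_subset (hseq : IsSequentialSeq lam) (hmono : Monotone lam)
    (hle : ∀ i, lam i ≤ w) {A B : Finset (Fin n)} (hsum : ∑ i ∈ A, lam i = ∑ i ∈ B, lam i)
    (hcard : (B.filter (lam · = w)).card < (A.filter (lam · = w)).card) :
    ∃ J ⊆ B, IsProperSplitting lam w J := by
  obtain ⟨Q, hQ, hQcard⟩ := Finset.exists_subset_card_eq hcard.le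
  obtain ⟨t, htA, htQ⟩ := Finset.exists_mem_notMem_of_card_lt_card (hQcard ▸ hcard)
  obtain ⟨ht, rfl⟩ := Finset.mem_filter.1 htA
  -- `Q` and the parts of size `lam t` of `B` cancel, which leaves a strictly smaller rest of `B`.
  have hrest : ∑ i ∈ A \ Q, lam i = ∑ i ∈ B with lam i ≠ lam t, lam i := by
    have hA := Finset.sum_sdiff (f := lam) (hQ.trans (Finset.filter_subset _ A))
    have hB := Finset.sum_filter_add_sum_filter_not B (lam · = lam t) lam
    rw [Finset.sum_const_nat fun i hi => (Finset.mem_filter.1 (hQ hi)).2] at hA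
    rw [Finset.sum_const_nat fun i hi => (Finset.mem_filter.1 hi).2, ← hQcard] at hB
    simp only [ne_eq]
    omega
  obtain ⟨J, hJB, hJ⟩ := hseq.exists_subset_sum_eq hmono hrest
    (Finset.mem_union_left _ (Finset.mem_sdiff.2 ⟨ht, htQ⟩)) fun p _ => hle p
  exact ⟨J, hJB.trans (Finset.filter_subset _ _),
    fun i hi => lt_of_le_of_ne (hle i) (Finset.mem_filter.1 (hJB hi)).2, hJ⟩

end Sequential

section Recolouring

variable {n w : ℕ} {lam : Fin n → ℕ} {κ : Type*} [DecidableEq κ] {f g : Fin n → κ}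
  {I J : Finset (Fin n)}

lemma exists_sum_eq_of_ne (hseq : IsSequentialSeq lam) (hmono : Monotone lam)
    (hfg : colourWeight lam f = colourWeight lam g) {t : Fin n} (hle : ∀ i, lam i ≤ lam t)
    (hft : f t ≠ g t) :
    ∃ J : Finset (Fin n), (∀ i ∈ J, f i = g t ∧ g i ≠ g t) ∧ ∑ i ∈ J, lam i = lam t := by
  have hsum := Finset.sum_sdiff_eq_sum_sdiff_iff.2 (congrFun hfg (g t)).symm
  have ht : t ∈ colourClass g (g t) \ colourClass f (g t) := by simp [hft]
  obtain ⟨J, hJsub, hJ⟩ := hseq.exists_subset_sum_eq hmono hsum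
    (Finset.mem_union_left _ ht) fun p _ => hle p
  exact ⟨J, fun i hi => by simpa using hJsub hi, hJ⟩

lemma exists_sum_eq_of_ne_of_isMonochromatic (hseq : IsSequentialSeq lam) (hmono : Monotone lam)
    (hfg : colourWeight lam f = colourWeight lam g) {t : Fin n} (hle : ∀ i, lam i ≤ lam t)
    (hft : f t ≠ g t) (hI : IsProperSplitting lam (lam t) I) (hf : IsMonochromatic f I) :
    ∃ J : Finset (Fin n), (J = I ∨ Disjoint J I) ∧ (∀ i ∈ J, f i = g t) ∧
      (∀ i ∈ J, lam i = lam t → g i ≠ g t) ∧ ∑ i ∈ J, lam i = lam t := by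
  obtain ⟨J, hJcol, hJ⟩ := exists_sum_eq_of_ne hseq hmono hfg hle hft
  by_cases hJI : Disjoint J I
  · exact ⟨J, .inr hJI, fun i hi => (hJcol i hi).1, fun i hi _ => (hJcol i hi).2, hJ⟩
  · obtain ⟨a, haJ, haI⟩ := Finset.not_disjoint_iff.1 hJI
    obtain ⟨j, hj⟩ := hf
    exact ⟨I, .inl rfl, fun i hi => (hj i hi).trans ((hj a haI).symm.trans (hJcol a haJ).1),
      fun i hi hit => absurd hit (hI.1 i hi).ne, hI.2⟩

lemma exists_disagreement_ssubset (hseq : IsSequentialSeq lam) (hmono : Monotone lam)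
    (hle : ∀ i, lam i ≤ w) (hI : IsProperSplitting lam w I) (hf : IsMonochromatic f I)
    (hfg : colourWeight lam f = colourWeight lam g) {t : Fin n} (ht : lam t = w)
    (hft : f t ≠ g t) :
    ∃ f' : Fin n → κ, IsMonochromatic f' I ∧ colourWeight lam f' = colourWeight lam g ∧
      (Finset.univ.filter fun i => lam i = w ∧ f' i ≠ g i) ⊂
        Finset.univ.filter fun i => lam i = w ∧ f i ≠ g i := by
  subst ht
  obtain ⟨J, hJI, hJf, hJg, hJ⟩ :=
    exists_sum_eq_of_ne_of_isMonochromatic hseq hmono hfg hle hft hI hf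
  have htJ : t ∉ J := fun h => hft (hJf t h)
  refine ⟨exchange f J t (g t), ?_, (colourWeight_exchange htJ hJf hJ).trans hfg, ?_⟩
  · rcases hJI with rfl | hJI
    · exact ⟨f t, fun i hi => exchange_of_mem hi⟩
    · obtain ⟨j, hj⟩ := hf
      refine ⟨j, fun i hi => ?_⟩
      rw [exchange_of_notMem (Finset.disjoint_right.1 hJI hi), hj i hi]
      rintro rfl
      exact (hI.1 i hi).ne rfl
  · refine Finset.ssubset_iff_subset_ne.2 ⟨fun i hi => ?_, fun heq => ?_⟩
    · simp only [Finset.mem_filter_univ] at hi ⊢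
      refine ⟨hi.1, ?_⟩
      by_cases hiJ : i ∈ J
      · exact fun hfgi => hJg i hiJ hi.1 (hfgi.symm.trans (hJf i hiJ))
      rcases eq_or_ne i t with rfl | hit
      · exact hft
      · exact fun hfgi => hi.2 ((exchange_of_notMem hiJ hit).trans hfgi)
    · have hmem := Finset.ext_iff.1 heq t
      simp [exchange_self htJ, hft] at hmem

lemma exists_agreeing_of_isMonochromatic (hseq : IsSequentialSeq lam) (hmono : Monotone lam)
    (hle : ∀ i, lam i ≤ w) (hI : IsProperSplitting lam w I) (hf : IsMonochromatic f I)
    (hfg : colourWeight lam f = colourWeight lam g) :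
    ∃ f' : Fin n → κ, IsMonochromatic f' I ∧ colourWeight lam f' = colourWeight lam g ∧
      ∀ i, lam i = w → f' i = g i := by
  induction hD : Finset.univ.filter fun i => lam i = w ∧ f i ≠ g i
    using Finset.strongInduction generalizing f with
  | H D ih =>
    by_cases hagree : ∀ i, lam i = w → f i = g i
    · exact ⟨f, hf, hfg, hagree⟩
    push Not at hagree
    obtain ⟨t, ht, hft⟩ := hagree
    obtain ⟨f', hf', hfg', hlt⟩ := exists_disagreement_ssubset hseq hmono hle hI hf hfg ht hft
    exact ih _ (hD ▸ hlt) hf' hfg' rfl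

lemma exists_isMonochromatic_of_toColex_lt (hseq : IsSequentialSeq lam)
    (hI : IsProperSplitting lam w I) (hJ : IsProperSplitting lam w J)
    (hJI : toColex J < toColex I) (hf : IsMonochromatic f J) :
    ∃ (f' : Fin n → κ) (J' : Finset (Fin n)), toColex J < toColex J' ∧
      IsProperSplitting lam w J' ∧ IsMonochromatic f' J' ∧
        colourWeight lam f' = colourWeight lam f := by
  obtain ⟨x, hx, hagree⟩ := Finset.Colex.lt_iff_exists_filter_lt.1 hJI
  have hmax : ∀ p ∈ (I \ J) ∪ (J \ I), p ≤ x := by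
    intro p hp
    by_contra! hxp
    have := Finset.ext_iff.1 hagree p
    simp only [Finset.mem_filter, Finset.mem_union, Finset.mem_sdiff] at this hp
    tauto
  obtain ⟨J₀, hJ₀, hxJ₀⟩ := hseq (I \ J) (J \ I)
    (Finset.sum_sdiff_eq_sum_sdiff_iff.2 (hI.2.trans hJ.2.symm)) x hx hmax
  obtain ⟨hxI, hxJ⟩ := Finset.mem_sdiff.1 hx
  have hJ₀J : J₀ ⊆ J := hJ₀.trans Finset.sdiff_subset
  obtain ⟨j, hj⟩ := hf
  refine ⟨exchange f J₀ x j, insert x (J \ J₀), ?_, ⟨?_, ?_⟩, ⟨j, ?_⟩, ?_⟩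
  · refine Finset.Colex.toColex_lt_toColex_iff_exists_forall_lt.2
      ⟨x, Finset.mem_insert_self _ _, hxJ, fun p hpJ hp => ?_⟩
    have hpJ₀ : p ∈ J₀ := by
      by_contra hpJ₀
      exact hp (Finset.mem_insert_of_mem (Finset.mem_sdiff.2 ⟨hpJ, hpJ₀⟩))
    exact (hmax p (Finset.mem_union_right _ (hJ₀ hpJ₀))).lt_of_ne (ne_of_mem_of_not_mem hpJ hxJ)
  · exact Finset.forall_mem_insert _ _ _ |>.2
      ⟨hI.1 x hxI, fun i hi => hJ.1 i (Finset.sdiff_subset hi)⟩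
  · rw [Finset.sum_insert (by simp [hxJ]), hxJ₀, add_comm, Finset.sum_sdiff hJ₀J, hJ.2]
  · refine Finset.forall_mem_insert _ _ _ |>.2 ⟨exchange_self fun h => hxJ (hJ₀J h), fun i hi => ?_⟩
    obtain ⟨hiJ, hiJ₀⟩ := Finset.mem_sdiff.1 hi
    rw [exchange_of_notMem hiJ₀ (ne_of_mem_of_not_mem hiJ hxJ), hj i hiJ]
  · exact colourWeight_exchange (fun h => hxJ (hJ₀J h)) (fun i hi => hj i (hJ₀J hi)) hxJ₀.symm

lemma exists_isMonochromatic_of_forall_toColex_le (hseq : IsSequentialSeq lam)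
    (hI : IsProperSplitting lam w I)
    (hmax : ∀ J, IsProperSplitting lam w J → toColex J ≤ toColex I)
    (hJ : IsProperSplitting lam w J) (hg : IsMonochromatic g J) :
    ∃ f : Fin n → κ, IsMonochromatic f I ∧ colourWeight lam f = colourWeight lam g := by
  let P : Set (Finset (Fin n)) := {J | IsProperSplitting lam w J ∧
    ∃ f : Fin n → κ, IsMonochromatic f J ∧ colourWeight lam f = colourWeight lam g}
  obtain ⟨K, ⟨hK, f, hf, hfg⟩, hKmax⟩ :=
    P.exists_max_image toColex P.toFinite ⟨J, hJ, g, hg, rfl⟩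
  obtain hKI | hKI := (hmax K hK).eq_or_lt
  · exact ⟨f, toColex.injective hKI ▸ hf, hfg⟩
  · obtain ⟨f', K', hKK', hK', hf', hff'⟩ :=
      exists_isMonochromatic_of_toColex_lt hseq hI hK hKI hf
    exact absurd (hKmax K' ⟨hK', f', hf', hff'.trans hfg⟩) hKK'.not_ge

end Recolouring

section Restriction

variable {m l w : ℕ} {κ : Type*} [DecidableEq κ]

lemma sum_eq_sum_castLE_add {M : Type*} [AddCommMonoid M] (hl : l ≤ m) (F : Fin m → M) :
    ∑ i, F i = ∑ i : Fin l, F (Fin.castLE hl i) + ∑ i with l ≤ Fin.val i, F i := by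
  have hlow : ({i : Fin m | ¬l ≤ i} : Finset (Fin m)) =
      Finset.univ.map (Fin.castLEEmb hl) := by
    ext i
    simp only [Finset.mem_filter_univ, Finset.mem_map, Finset.mem_univ, true_and, not_le]
    exact ⟨fun hi => ⟨⟨i, hi⟩, rfl⟩, by rintro ⟨k, rfl⟩; exact k.2⟩
  rw [← Finset.sum_filter_not_add_sum_filter Finset.univ fun i : Fin m => l ≤ i, hlow,
    Finset.sum_map]
  rfl

lemma apply_eq_apply_last_iff_of_monotone {α : Type*} [PartialOrder α] [DecidableEq α] {n : ℕ}
    {a : Fin (n + 1) → α} (ha : Monotone a) (i : Fin (n + 1)) :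
    a i = a (Fin.last n) ↔ n + 1 - (Finset.univ.filter (a · = a (Fin.last n))).card ≤ i := by
  constructor
  · intro hi
    have hcard : (Finset.Ici i).card ≤ (Finset.univ.filter (a · = a (Fin.last n))).card :=
      Finset.card_le_card fun k hk => (Finset.mem_filter_univ k).2
        ((ha (Fin.le_last k)).antisymm (hi ▸ ha (Finset.mem_Ici.1 hk)))
    rw [Fin.card_Ici] at hcard
    omega
  · intro hi
    by_contra hne
    have hcard : (Finset.univ.filter (a · = a (Fin.last n))).card ≤ (Finset.Ioi i).card := by
      refine Finset.card_le_card fun k hk => Finset.mem_Ioi.2 (not_le.1 fun hki => hne ?_)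
      exact (ha (Fin.le_last i)).antisymm ((Finset.mem_filter.1 hk).2 ▸ ha hki)
    rw [Fin.card_Ioi] at hcard
    omega

lemma filterMap_map_val_eq (hl : l ≤ m) (B : Finset (Fin m)) :
    (B.val.map Fin.val).filterMap (fun i => if h : i < l then some (⟨i, h⟩ : Fin l) else none) =
      ({k | Fin.castLE hl k ∈ B} : Finset (Fin l)).val := by
  refine (Multiset.Nodup.ext (.filterMap _ (fun i j k hi hj => ?_)
    (B.nodup.map Fin.val_injective)) (Finset.nodup _)).2 fun k => ?_
  · simp only [Option.mem_def, Option.dite_none_right_eq_some, Option.some.injEq] at hi hj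
    obtain ⟨⟨_, rfl⟩, ⟨_, hij⟩⟩ := hi, hj
    exact (congrArg Fin.val hij).symm
  · simp only [Multiset.mem_filterMap, Multiset.mem_map, Finset.mem_val, Finset.mem_filter_univ,
      Option.dite_none_right_eq_some, Option.some.injEq]
    constructor
    · rintro ⟨_, ⟨i, hi, rfl⟩, _, rfl⟩
      exact hi
    · exact fun hk => ⟨k, ⟨_, hk, rfl⟩, k.2, rfl⟩

lemma restrictFirst_colourClasses (hl : l ≤ m) (g : Fin m → κ) :
    restrictFirst l (colourClasses g) = colourClasses (g ∘ Fin.castLE hl) := by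
  -- In `restrictFirst` a block is first coerced to `Multiset ℕ`, through the monadic `bind`.
  have hblock (B : Finset (Fin m)) : (B.val >>= fun i => pure (i : ℕ)) = B.val.map Fin.val := by
    simp only [Multiset.bind_def, Multiset.pure_def, Multiset.bind_singleton]
  have hclass (j : κ) : ({k | Fin.castLE hl k ∈ colourClass g j} : Finset (Fin l)) =
      colourClass (g ∘ Fin.castLE hl) j := by
    ext k
    simp
  have himage : ((Finset.univ.image g).filter fun j =>
      (colourClass (g ∘ Fin.castLE hl) j).val ≠ 0) = Finset.univ.image (g ∘ Fin.castLE hl) := by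
    ext j
    simp only [ne_eq, Finset.val_eq_zero, ← Finset.nonempty_iff_ne_empty, Finset.mem_filter,
      Finset.mem_image, Finset.mem_univ, true_and, Function.comp_apply]
    refine ⟨fun ⟨_, k, hk⟩ => ⟨k, by simpa using hk⟩, ?_⟩
    rintro ⟨k, rfl⟩
    exact ⟨⟨_, rfl⟩, k, mem_colourClass.2 rfl⟩
  rw [restrictFirst, colourClasses, Multiset.map_map, colourClasses, ← himage, Finset.filter_val]
  simp only [Function.comp_apply, hblock, filterMap_map_val_eq hl, hclass, Multiset.filter_map]

lemma colourWeight_eq_iff_comp_castLE {M : Type*} [AddCancelCommMonoid M] {lam : Fin m → M}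
    (hl : l ≤ m) {f g : Fin m → κ} (hfg : ∀ i : Fin m, l ≤ i → f i = g i) :
    colourWeight lam f = colourWeight lam g ↔
      colourWeight (lam ∘ Fin.castLE hl) (f ∘ Fin.castLE hl) =
        colourWeight (lam ∘ Fin.castLE hl) (g ∘ Fin.castLE hl) := by
  have htop : ∑ i with l ≤ Fin.val i, (Pi.single (f i) (lam i) : κ → M) =
      ∑ i with l ≤ Fin.val i, Pi.single (g i) (lam i) :=
    Finset.sum_congr rfl fun i hi => by rw [hfg i (Finset.mem_filter.1 hi).2]
  simp only [colourWeight_eq_sum_single, Function.comp_apply]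
  rw [sum_eq_sum_castLE_add hl, htop,
    sum_eq_sum_castLE_add hl (fun i => (Pi.single (g i) (lam i) : κ → M)), add_left_inj]

variable {lam : Fin m → ℕ} {I : Finset (Fin l)}

lemma exists_isMonochromatic_iff_comp_castLE (hmono : Monotone lam) (hseq : IsSequentialSeq lam)
    (hl : l ≤ m) (hle : ∀ i, lam i ≤ w) (htop : ∀ i, lam i = w ↔ l ≤ i)
    (hI : IsProperSplitting lam w (I.map (Fin.castLEEmb hl))) (g : Fin m → κ) :
    (∃ f : Fin m → κ, IsMonochromatic f (I.map (Fin.castLEEmb hl)) ∧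
      colourWeight lam f = colourWeight lam g) ↔
    ∃ f : Fin l → κ, IsMonochromatic f I ∧
      colourWeight (lam ∘ Fin.castLE hl) f =
        colourWeight (lam ∘ Fin.castLE hl) (g ∘ Fin.castLE hl) := by
  constructor
  · rintro ⟨f, hf, hfg⟩
    obtain ⟨f', ⟨j, hj⟩, hf'g, hagree⟩ :=
      exists_agreeing_of_isMonochromatic hseq hmono hle hI hf hfg
    exact ⟨f' ∘ Fin.castLE hl, ⟨j, fun i hi => hj _ (Finset.mem_map_of_mem _ hi)⟩,
      (colourWeight_eq_iff_comp_castLE hl fun i hi => hagree i ((htop i).2 hi)).1 hf'g⟩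
  · rintro ⟨f, ⟨j, hj⟩, hfg⟩
    have hext : Function.extend (Fin.castLE hl) f g ∘ Fin.castLE hl = f :=
      Function.extend_comp (Fin.castLE_injective hl) f g
    refine ⟨Function.extend (Fin.castLE hl) f g, ⟨j, Finset.forall_mem_map.2 fun i hi => ?_⟩,
      (colourWeight_eq_iff_comp_castLE hl fun i hi => ?_).2 (hext.symm ▸ hfg)⟩
    · exact (congrFun hext i).trans (hj i hi)
    · refine Function.extend_apply' _ _ _ ?_
      rintro ⟨k, rfl⟩
      exact k.2.not_ge hi

lemma colourClasses_mem_downClos_iff_comp_castLE (hpos : ∀ i, 0 < lam i) (hmono : Monotone lam)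
    (hseq : IsSequentialSeq lam) (hl : l ≤ m) (hw : w ≠ 0) (hle : ∀ i, lam i ≤ w)
    (htop : ∀ i, lam i = w ↔ l ≤ i) (hI : IsProperSplitting lam w (I.map (Fin.castLEEmb hl)))
    (g : Fin m → κ) :
    colourClasses g ∈ downClos (cutOf lam) (onlyBlock (I.map (Fin.castLEEmb hl))) ↔
      colourClasses (g ∘ Fin.castLE hl) ∈
        downClos (cutOf (lam ∘ Fin.castLE hl)) (onlyBlock I) := by
  have hne := Finset.card_pos.1 (Nat.zero_lt_of_lt (hI.one_lt_card hw))
  rw [colourClasses_mem_downClos_iff hpos hne,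
    exists_isMonochromatic_iff_comp_castLE hmono hseq hl hle htop hI,
    colourClasses_mem_downClos_iff (lam := lam ∘ Fin.castLE hl) (fun i => hpos _)
      (Finset.map_nonempty.1 hne)]

lemma mem_downClos_iff_restrictFirst (hpos : ∀ i, 0 < lam i) (hmono : Monotone lam)
    (hseq : IsSequentialSeq lam) (hl : l ≤ m) (hw : w ≠ 0) (hle : ∀ i, lam i ≤ w)
    (htop : ∀ i, lam i = w ↔ l ≤ i) (hI : IsProperSplitting lam w (I.map (Fin.castLEEmb hl)))
    {ρ : Multiset (Multiset (Fin m))} (hρ : IsPartitionM ρ) :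
    ρ ∈ downClos (cutOf lam) (onlyBlock (I.map (Fin.castLEEmb hl))) ↔
      restrictFirst l ρ ∈ downClos (cutOf (lam ∘ Fin.castLE hl)) (onlyBlock I) := by
  obtain ⟨g, rfl⟩ := hρ.exists_eq_colourClasses
  rw [restrictFirst_colourClasses hl,
    colourClasses_mem_downClos_iff_comp_castLE hpos hmono hseq hl hw hle htop hI]

end Restriction

section SignPartition

variable {n : ℕ} {lam : Fin n → ℕ} {A : Finset (Fin n)} {x : Fin n → ℝ}

/-- The colouring of the indices by the signs of `x`, where each zero of `x` gets a colour of its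
own. Its colour classes are the blocks of `partOf x`, apart from empty ones. -/
noncomputable def signColouring (x : Fin n → ℝ) (i : Fin n) : ℝ ⊕ Fin n :=
  if x i = 0 then .inr i else .inl (x i)

lemma signColouring_eq_inl_iff {c : ℝ} (hc : c ≠ 0) {i : Fin n} :
    signColouring x i = .inl c ↔ x i = c := by
  unfold signColouring
  split_ifs with hi <;> simp [hi, hc.symm]

lemma signColouring_eq_inr_iff {i k : Fin n} : signColouring x i = .inr k ↔ x i = 0 ∧ i = k := by
  unfold signColouring
  split_ifs with hi <;> simp [hi]

lemma IsCube.sum_partOf (hx : IsCube x) : (partOf x).sum = Finset.univ.val := by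
  rw [partOf, Multiset.sum_cons, Multiset.sum_cons, Multiset.sum_map_singleton, plusM, minusM]
  ext i
  simp only [Multiset.count_add, Multiset.count_eq_of_nodup (Finset.nodup _), Finset.mem_val,
    Finset.mem_filter_univ, Finset.mem_univ]
  rcases hx i with h | h | h <;> norm_num [h]

lemma IsCube.isPartitionM_partOf_iff (hx : IsCube x) :
    IsPartitionM (partOf x) ↔ plusM x ≠ 0 ∧ minusM x ≠ 0 := by
  rw [isPartitionM_iff, and_iff_left hx.sum_partOf]
  simp +contextual [partOf]

lemma partOf_eq_colourClasses (hx : IsPartitionM (partOf x)) :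
    partOf x = colourClasses (signColouring x) := by
  refine hx.eq_colourClasses fun B hB => ?_
  simp only [partOf, Multiset.mem_cons, Multiset.mem_map, Finset.mem_val,
    Finset.mem_filter_univ] at hB
  rcases hB with rfl | rfl | ⟨i, hi, rfl⟩
  · refine ⟨.inl 1, congrArg Finset.val (Finset.ext fun i => ?_)⟩
    simp [signColouring_eq_inl_iff one_ne_zero]
  · refine ⟨.inl (-1), congrArg Finset.val (Finset.ext fun i => ?_)⟩
    simp [signColouring_eq_inl_iff (neg_ne_zero.2 one_ne_zero)]
  · refine ⟨.inr i, congrArg Finset.val (a₂ := {i}) (Finset.ext fun k => ?_)⟩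
    simp only [mem_colourClass, signColouring_eq_inr_iff, Finset.mem_singleton]
    exact and_iff_right_of_imp fun hk => hk ▸ hi

lemma plusM_ne_zero_and_minusM_ne_zero (hpos : ∀ i, 0 < lam i) (hx : x ∈ cutOf lam)
    (hx0 : x ≠ 0) : plusM x ≠ 0 ∧ minusM x ≠ 0 := by
  have hweight (B : Multiset (Fin n)) : weight lam B ≠ 0 ↔ B ≠ 0 := by
    rw [not_iff_not, weight, Multiset.sum_eq_zero_iff, Multiset.eq_zero_iff_forall_notMem]
    simp [(hpos _).ne']
  have hiff : plusM x ≠ 0 ↔ minusM x ≠ 0 := by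
    rw [← hweight, ← hweight, weight_plusM_eq_weight_minusM hx]
  obtain ⟨i, hi⟩ := Function.ne_iff.1 hx0
  rcases hx.1 i with h | h | h
  · have hminus : minusM x ≠ 0 := fun h0 => by simpa [h0] using (by simp [minusM, h] : i ∈ minusM x)
    exact ⟨hiff.2 hminus, hminus⟩
  · exact absurd h hi
  · have hplus : plusM x ≠ 0 := fun h0 => by simpa [h0] using (by simp [plusM, h] : i ∈ plusM x)
    exact ⟨hplus, hiff.1 hplus⟩

lemma colourClasses_notMem_downClos_of_injective {κ : Type*} [DecidableEq κ]
    (hpos : ∀ i, 0 < lam i) (hA : 1 < A.card) {g : Fin n → κ} (hg : Function.Injective g) :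
    colourClasses g ∉ downClos (cutOf lam) (onlyBlock A) := by
  rw [colourClasses_mem_downClos_iff hpos (Finset.card_pos.1 (Nat.zero_lt_of_lt hA))]
  rintro ⟨f, ⟨j, hj⟩, hfg⟩
  have himage := image_eq_image_of_colourWeight_eq (fun i => (hpos i).ne') hfg
  have hf : Set.InjOn f (Finset.univ : Finset (Fin n)) := by
    rw [← Finset.card_image_iff, himage, Finset.card_image_of_injective _ hg]
  obtain ⟨a, ha, b, hb, hab⟩ := Finset.one_lt_card.1 hA
  exact hab (hf (Finset.mem_univ a) (Finset.mem_univ b) ((hj a ha).trans (hj b hb).symm))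

lemma partOf_mem_downClos_iff (hpos : ∀ i, 0 < lam i) (hA : 1 < A.card) (hx : x ∈ cutOf lam) :
    partOf x ∈ downClos (cutOf lam) (onlyBlock A) ↔
      colourClasses (signColouring x) ∈ downClos (cutOf lam) (onlyBlock A) := by
  rcases eq_or_ne x 0 with rfl | hx0
  · -- The partition of `0` has empty blocks, so that it does not even count as a partition.
    refine iff_of_false (fun h => ?_) (colourClasses_notMem_downClos_of_injective hpos hA ?_)
    · simpa [plusM] using (hx.1.isPartitionM_partOf_iff.1 h.1).1
    · exact fun i k hik => by simpa [signColouring] using hik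
  · rw [partOf_eq_colourClasses
      (hx.1.isPartitionM_partOf_iff.2 (plusM_ne_zero_and_minusM_ne_zero hpos hx hx0))]

lemma colourClasses_signColouring_comp_castLE {l : ℕ} (hl : l ≤ n) (x : Fin n → ℝ) :
    colourClasses (signColouring x ∘ Fin.castLE hl) =
      colourClasses (signColouring (x ∘ Fin.castLE hl)) := by
  have hcomp : signColouring x ∘ Fin.castLE hl =
      Sum.map id (Fin.castLE hl) ∘ signColouring (x ∘ Fin.castLE hl) := by
    funext i
    simp only [signColouring, Function.comp_apply]
    split_ifs <;> rfl
  rw [hcomp, colourClasses_comp_injective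
    (Function.injective_id.sumMap (Fin.castLE_injective hl))]

end SignPartition

section RelativeCut

variable {m l w : ℕ} {lam : Fin m → ℕ} {x : Fin m → ℝ}

lemma partOf_mem_downClos_iff_comp_castLE (hpos : ∀ i, 0 < lam i) (hmono : Monotone lam)
    (hseq : IsSequentialSeq lam) (hl : l ≤ m) (hw : w ≠ 0) (hle : ∀ i, lam i ≤ w)
    (htop : ∀ i, lam i = w ↔ l ≤ i) {I : Finset (Fin l)}
    (hI : IsProperSplitting lam w (I.map (Fin.castLEEmb hl))) (hx : x ∈ cutOf lam)
    (hx' : x ∘ Fin.castLE hl ∈ cutOf (lam ∘ Fin.castLE hl)) :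
    partOf x ∈ downClos (cutOf lam) (onlyBlock (I.map (Fin.castLEEmb hl))) ↔
      partOf (x ∘ Fin.castLE hl) ∈
        downClos (cutOf (lam ∘ Fin.castLE hl)) (onlyBlock I) := by
  have hcard := hI.one_lt_card hw
  rw [partOf_mem_downClos_iff hpos hcard hx,
    colourClasses_mem_downClos_iff_comp_castLE hpos hmono hseq hl hw hle htop hI,
    colourClasses_signColouring_comp_castLE,
    partOf_mem_downClos_iff (lam := lam ∘ Fin.castLE hl) (fun i => hpos _)
      (I.card_map _ ▸ hcard) hx']

lemma exists_isProperSplitting_of_sum_ne_zero (hmono : Monotone lam)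
    (hseq : IsSequentialSeq lam) (hle : ∀ i, lam i ≤ w) (hx : x ∈ cutOf lam)
    (hsum : ∑ i with lam i = w, x i ≠ 0) :
    ∃ J, IsProperSplitting lam w J ∧ IsMonochromatic (signColouring x) J := by
  have hw : ∑ i with x i = 1, lam i = ∑ i with x i = -1, lam i := weight_plusM_eq_weight_minusM hx
  have hcard := hx.1.sum_mul_eq_sub {i | lam i = w} 1
  simp only [Pi.one_apply, one_mul, Finset.sum_const, nsmul_one] at hcard
  rw [hcard, sub_ne_zero, Nat.cast_injective.ne_iff, Finset.filter_comm,
    Finset.filter_comm (lam · = w)] at hsum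
  rcases hsum.lt_or_gt with hlt | hlt
  · obtain ⟨J, hJ, hJsplit⟩ := exists_isProperSplitting_subset hseq hmono hle hw.symm hlt
    exact ⟨J, hJsplit, .inl 1, fun i hi =>
      (signColouring_eq_inl_iff one_ne_zero).2 (Finset.mem_filter.1 (hJ hi)).2⟩
  · obtain ⟨J, hJ, hJsplit⟩ := exists_isProperSplitting_subset hseq hmono hle hw hlt
    exact ⟨J, hJsplit, .inl (-1), fun i hi =>
      (signColouring_eq_inl_iff (neg_ne_zero.2 one_ne_zero)).2 (Finset.mem_filter.1 (hJ hi)).2⟩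

lemma partOf_mem_downClos_of_sum_ne_zero (hpos : ∀ i, 0 < lam i) (hmono : Monotone lam)
    (hseq : IsSequentialSeq lam) (hle : ∀ i, lam i ≤ w) {I : Finset (Fin m)}
    (hI : IsProperSplitting lam w I)
    (hmax : ∀ J, IsProperSplitting lam w J → toColex J ≤ toColex I) (hx : x ∈ cutOf lam)
    (hsum : ∑ i with lam i = w, x i ≠ 0) : partOf x ∈ downClos (cutOf lam) (onlyBlock I) := by
  obtain ⟨J, hJ, hxJ⟩ := exists_isProperSplitting_of_sum_ne_zero hmono hseq hle hx hsum
  obtain ⟨t, ht, -⟩ := Finset.exists_ne_zero_of_sum_ne_zero hsum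
  have hcard := hI.one_lt_card ((Finset.mem_filter.1 ht).2 ▸ (hpos t).ne')
  rw [partOf_mem_downClos_iff hpos hcard hx,
    colourClasses_mem_downClos_iff hpos (Finset.card_pos.1 (Nat.zero_lt_of_lt hcard))]
  exact exists_isMonochromatic_of_forall_toColex_le hseq hI hmax hJ hxJ

lemma mem_cutOf_iff_comp_castLE (hl : l ≤ m) (htop : ∀ i : Fin m, l ≤ i → lam i = w)
    (hsum : ∑ i with l ≤ Fin.val i, x i = 0) :
    x ∈ cutOf lam ↔ IsCube x ∧ x ∘ Fin.castLE hl ∈ cutOf (lam ∘ Fin.castLE hl) := by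
  have hzero : ∑ i with l ≤ Fin.val i, (lam i : ℝ) * x i = 0 := by
    rw [Finset.sum_congr rfl fun i hi => by rw [htop i (Finset.mem_filter.1 hi).2],
      ← Finset.mul_sum, hsum, mul_zero]
  have hsplit := sum_eq_sum_castLE_add hl fun i => (lam i : ℝ) * x i
  rw [hzero, add_zero] at hsplit
  refine and_congr_right fun hx => ?_
  rw [hsplit]
  exact (and_iff_right fun i => hx _).symm

lemma mem_cutMinus_iff_comp_castLE (hpos : ∀ i, 0 < lam i) (hmono : Monotone lam)
    (hseq : IsSequentialSeq lam) (hl : l ≤ m) (hw : w ≠ 0) (hle : ∀ i, lam i ≤ w)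
    (htop : ∀ i, lam i = w ↔ l ≤ i) {I : Finset (Fin l)}
    (hI : IsProperSplitting lam w (I.map (Fin.castLEEmb hl)))
    (hmax : ∀ J, IsProperSplitting lam w J → toColex J ≤ toColex (I.map (Fin.castLEEmb hl))) :
    x ∈ cutMinus (cutOf lam) (downClos (cutOf lam) (onlyBlock (I.map (Fin.castLEEmb hl)))) ↔
      IsCube x ∧ x ∘ Fin.castLE hl ∈ cutMinus (cutOf (lam ∘ Fin.castLE hl))
          (downClos (cutOf (lam ∘ Fin.castLE hl)) (onlyBlock I)) ∧
        ∑ i with l ≤ Fin.val i, x i = 0 := by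
  by_cases hsum : ∑ i with l ≤ Fin.val i, x i = 0
  · have hcut := mem_cutOf_iff_comp_castLE hl (fun i => (htop i).2) hsum
    rw [and_iff_left hsum, cutMinus, cutMinus, Set.mem_ofPred_eq, Set.mem_ofPred_eq, ← and_assoc,
      ← hcut]
    exact and_congr_right fun hx => not_congr <|
      partOf_mem_downClos_iff_comp_castLE hpos hmono hseq hl hw hle htop hI hx (hcut.1 hx).2
  · refine iff_of_false (fun hx => hx.2 ?_) fun hx => hsum hx.2.2
    refine partOf_mem_downClos_of_sum_ne_zero hpos hmono hseq hle hI hmax hx.1 ?_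
    simpa only [htop] using hsum

end RelativeCut

/-- for a sequential `λ` with `I(λ)` existing, the relative cut
`Q(S_λ, π↓S_λ)` is the product of `Q(T, ν↓T)` with the trivial resonance `(1^μ)`,
where `μ = mm(λ)` and `T` is the cut of `λ` restricted to the first `n−μ` parts. -/
theorem relative_cut_sequential {n : ℕ} (lam : Fin (n + 1) → ℕ)
    (hpos : ∀ i, 0 < lam i) (hmono : Monotone lam) (hseq : IsSequentialSeq lam)
    (I : Finset (Fin (n + 1))) (hI : IsIlam lam I)
    (μ : ℕ) (hμ : μ = (Finset.univ.filter (fun i => lam i = lam (Fin.last n))).card)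
    (hμn : μ ≤ n)
    (I' : Finset (Fin (n + 1 - μ)))
    (hI' : I = I'.map (Fin.castLEEmb (by omega))) :
    -- (i)
    downClos (cutOf lam) (onlyBlock I) =
      {ρ | IsPartitionM ρ ∧ restrictFirst (n + 1 - μ) ρ ∈
        downClos (cutOf (fun i : Fin (n + 1 - μ) => lam (Fin.castLE (by omega) i)))
          (onlyBlock I')} ∧
    -- (ii)
    cutMinus (cutOf lam) (downClos (cutOf lam) (onlyBlock I)) =
      {x | IsCube x ∧
        (fun i : Fin (n + 1 - μ) => x (Fin.castLE (by omega) i)) ∈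
          cutMinus (cutOf (fun i : Fin (n + 1 - μ) => lam (Fin.castLE (by omega) i)))
            (downClos (cutOf (fun i : Fin (n + 1 - μ) => lam (Fin.castLE (by omega) i)))
              (onlyBlock I')) ∧
        (∑ i : Fin (n + 1), if n + 1 - μ ≤ (i : ℕ) then x i else 0) = 0} := by
  subst hI' hμ
  have hl := Nat.sub_le (n + 1) (Finset.univ.filter (lam · = lam (Fin.last n))).card
  have hw : lam (Fin.last n) ≠ 0 := (hpos _).ne'
  have hle (i) : lam i ≤ lam (Fin.last n) := hmono (Fin.le_last i)
  have htop := apply_eq_apply_last_iff_of_monotone hmono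
  have hsplit := (goodSet_iff_isProperSplitting hpos).1 hI.1
  have hmax (J) (hJ : IsProperSplitting lam (lam (Fin.last n)) J) :=
    (hI.2 J ((goodSet_iff_isProperSplitting hpos).2 hJ)).toColex_le
  constructor
  · exact Set.ext fun ρ => (and_iff_right_of_imp And.left).symm.trans <| and_congr_right fun hρ =>
      mem_downClos_iff_restrictFirst hpos hmono hseq hl hw hle htop hsplit hρ
  · simp only [← Finset.sum_filter]
    exact Set.ext fun x =>
      mem_cutMinus_iff_comp_castLE hpos hmono hseq hl hw hle htop hsplit hmax
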